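/- arXiv:1111.6699 — 4 statements merged into one kernel-verified Lean document; each statement's English description precedes it below -/
import Mathlib

section
/- Let ℤ/2 act on the unit circle {z ∈ ℂ : |z| = 1} so that the nontrivial element acts by complex conjugation z ↦ z̄. For every integer k ≥ 2, the orbit configuration space F_{ℤ/2}(S¹, k) = {(x₁, …, x_k) ∈ (S¹)^k : for all i ≠ j, x_i ≠ x_j and x_i ≠ x̄_j}, equipped with the subspace topology of (S¹)^k, is homotopy equivalent to a discrete space with exactly k!·2^(k−2) points. -/
namespace OrbConf

open Topology

/-- The orbit configuration space. -/
abbrev X (k : ℕ) : Type := {x : Fin k → Metric.sphere (0 : ℂ) 1 //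
          ∀ i j : Fin k, i ≠ j →
            (x i : ℂ) ≠ (x j : ℂ) ∧ (x i : ℂ) ≠ (starRingEnd ℂ) (x j : ℂ)}

/-- real part of a coordinate -/
def c {k : ℕ} (x : X k) (i : Fin k) : ℝ := (x.1 i : ℂ).re
/-- imaginary part of a coordinate -/
def s {k : ℕ} (x : X k) (i : Fin k) : ℝ := (x.1 i : ℂ).im

variable {k : ℕ}

lemma c_cont (i : Fin k) : Continuous (fun x : X k => c x i) := by
  exact Complex.continuous_re.comp (continuous_subtype_val.comp
    ((continuous_apply i).comp continuous_subtype_val))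

lemma s_cont (i : Fin k) : Continuous (fun x : X k => s x i) := by
  exact Complex.continuous_im.comp (continuous_subtype_val.comp
    ((continuous_apply i).comp continuous_subtype_val))

lemma sq_add (x : X k) (i : Fin k) : c x i ^ 2 + s x i ^ 2 = 1 := by
  have h : ‖(x.1 i : ℂ)‖ = 1 := mem_sphere_zero_iff_norm.1 (x.1 i).2
  have h2 := Complex.sq_norm (x.1 i : ℂ)
  rw [h, Complex.normSq_apply] at h2
  unfold c s; nlinarith

lemma c_inj (x : X k) {i j : Fin k} (h : i ≠ j) : c x i ≠ c x j := by
  intro he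
  have h1 := sq_add x i
  have h2 := sq_add x j
  obtain ⟨h3, h4⟩ := x.2 i j h
  have : s x i ^ 2 = s x j ^ 2 := by rw [he] at h1; linarith
  rcases sq_eq_sq_iff_eq_or_eq_neg.1 this with h5 | h5
  · exact h3 (Complex.ext he h5)
  · exact h4 (Complex.ext (by simpa [c] using he) (by simpa [s] using h5))

/-- build a configuration -/
def build (a b : Fin k → ℝ) (h : ∀ i, a i ^ 2 + b i ^ 2 = 1)
    (hinj : ∀ i j, i ≠ j → a i ≠ a j) : X k :=
  ⟨fun i => ⟨⟨a i, b i⟩, by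
    rw [mem_sphere_zero_iff_norm, Complex.norm_eq_sqrt_sq_add_sq]
    simp [h i]⟩, fun i j hij => ⟨fun he => hinj i j hij (by simpa using congrArg Complex.re he),
      fun he => hinj i j hij (by simpa using congrArg Complex.re he)⟩⟩

lemma X_ext {x y : X k} (h1 : ∀ i, c x i = c y i) (h2 : ∀ i, s x i = s y i) : x = y := by
  apply Subtype.ext; funext i; apply Subtype.ext
  exact Complex.ext (h1 i) (h2 i)

lemma c_abs (x : X k) (i : Fin k) : -1 ≤ c x i ∧ c x i ≤ 1 := by
  have := sq_add x i
  constructor <;> nlinarith [sq_nonneg (s x i)]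

open Classical in
/-- rank of a coordinate -/
noncomputable def rk (x : X k) (i : Fin k) : ℕ :=
  (Finset.univ.filter (fun j => c x j < c x i)).card

lemma rk_lt (x : X k) (i : Fin k) : rk x i < k := by
  classical
  have : (Finset.univ.filter (fun j => c x j < c x i)) ⊂ Finset.univ := by
    rw [Finset.ssubset_univ_iff]
    intro h
    have := h ▸ Finset.mem_univ i
    simp at this
  simpa [rk] using Finset.card_lt_card this

lemma rk_mono (x : X k) {i j : Fin k} (h : c x i < c x j) : rk x i < rk x j := by
  classical
  apply Finset.card_lt_card
  rw [Finset.ssubset_iff_of_subset]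
  · exact ⟨i, by simpa using h, by simp⟩
  · intro l hl
    simp only [Finset.mem_filter, Finset.mem_univ, true_and] at hl ⊢
    exact hl.trans h

lemma rk_inj (x : X k) : Function.Injective (fun i => (⟨rk x i, rk_lt x i⟩ : Fin k)) := by
  intro i j h
  by_contra hne
  have h' : rk x i = rk x j := by simpa using h
  rcases lt_or_gt_of_ne (c_inj x hne) with h1 | h1
  · exact absurd (rk_mono x h1) (by omega)
  · exact absurd (rk_mono x h1) (by omega)

/-- rank permutation -/
noncomputable def rp (x : X k) : Equiv.Perm (Fin k) :=
  Equiv.ofBijective _ (Finite.injective_iff_bijective.1 (rk_inj x))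

lemma rp_val (x : X k) (i : Fin k) : (rp x i).val = rk x i := rfl

lemma s_zero (x : X k) (i : Fin k) (h : s x i = 0) :
    (c x i = 1 ∧ rk x i = k - 1) ∨ (c x i = -1 ∧ rk x i = 0) := by
  classical
  have h1 := sq_add x i
  rw [h] at h1
  have h2 : c x i ^ 2 = 1 := by linarith
  rcases (by simpa using h2 : c x i = 1 ∨ c x i = -1) with h3 | h3
  · left
    refine ⟨h3, ?_⟩
    have : (Finset.univ.filter (fun j => c x j < c x i)) = Finset.univ.erase i := by
      ext j
      simp only [Finset.mem_filter, Finset.mem_univ, true_and, Finset.mem_erase, and_true]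
      constructor
      · rintro hj rfl; exact lt_irrefl _ hj
      · intro hj; exact lt_of_le_of_ne (h3 ▸ (c_abs x j).2) (c_inj x hj)
    unfold rk
    rw [this]; simp
  · right
    refine ⟨h3, ?_⟩
    unfold rk
    rw [Finset.card_eq_zero, Finset.filter_eq_empty_iff]
    intro j _
    rw [h3, not_lt]; exact (c_abs x j).1

/-- target real part of rank n -/
noncomputable def tg (k n : ℕ) : ℝ := -1 + 2 * (n : ℝ) / ((k : ℝ) - 1)

lemma tg_zero : tg k 0 = -1 := by simp [tg]

lemma tg_last (hk : 2 ≤ k) : tg k (k - 1) = 1 := by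
  have : (2 : ℝ) ≤ k := by exact_mod_cast hk
  have h : (k : ℝ) - 1 ≠ 0 := by linarith
  rw [tg, Nat.cast_sub (by omega)]
  field_simp; push_cast; ring

lemma tg_mono (hk : 2 ≤ k) : StrictMono (tg k) := by
  intro m n h
  have : (2 : ℝ) ≤ k := by exact_mod_cast hk
  have h : (0 : ℝ) < (k : ℝ) - 1 := by linarith
  unfold tg
  gcongr

lemma tg_abs (hk : 2 ≤ k) {n : ℕ} (h : n < k) : -1 ≤ tg k n ∧ tg k n ≤ 1 := by
  constructor
  · rw [← tg_zero (k := k)]; exact (tg_mono hk).monotone (Nat.zero_le _)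
  · rw [← tg_last hk]; exact (tg_mono hk).monotone (by omega)

/-- real part of the homotopy -/
noncomputable def ct (t : ℝ) (x : X k) (i : Fin k) : ℝ := (1 - t) * c x i + t * tg k (rk x i)

/-- imaginary part of the homotopy -/
noncomputable def st (t : ℝ) (x : X k) (i : Fin k) : ℝ :=
  (SignType.sign (s x i) : ℝ) * √(1 - ct t x i ^ 2)

lemma ct_abs (hk : 2 ≤ k) {t : ℝ} (h0 : 0 ≤ t) (h1 : t ≤ 1) (x : X k) (i : Fin k) :
    ct t x i ^ 2 ≤ 1 := by
  have a := c_abs x i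
  have b := tg_abs hk (rk_lt x i)
  unfold ct
  rw [sq_le_one_iff_abs_le_one, abs_le]
  constructor <;> nlinarith

lemma ct_inj (hk : 2 ≤ k) {t : ℝ} (h0 : 0 ≤ t) (h1 : t ≤ 1) (x : X k) (i j : Fin k)
    (hij : i ≠ j) : ct t x i ≠ ct t x j := by
  have key : ∀ i j, c x i < c x j → ct t x i < ct t x j := by
    intro i j h
    have h2 := tg_mono hk (rk_mono x h)
    unfold ct
    rcases eq_or_lt_of_le h0 with h3 | h3
    · subst h3; simpa using h
    · nlinarith
  rcases lt_or_gt_of_ne (c_inj x hij) with h | h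
  · exact (key i j h).ne
  · exact (key j i h).ne'

lemma ct_zero_of (hk : 2 ≤ k) (t : ℝ) (x : X k) (i : Fin k) (h : s x i = 0) :
    ct t x i ^ 2 = 1 := by
  unfold ct
  rcases s_zero x i h with ⟨h1, h2⟩ | ⟨h1, h2⟩
  · rw [h1, h2, tg_last hk]; ring
  · rw [h1, h2, tg_zero]; ring

lemma ct_st (hk : 2 ≤ k) {t : ℝ} (h0 : 0 ≤ t) (h1 : t ≤ 1) (x : X k) (i : Fin k) :
    ct t x i ^ 2 + st t x i ^ 2 = 1 := by
  have h := ct_abs hk h0 h1 x i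
  unfold st
  rw [mul_pow, Real.sq_sqrt (by linarith)]
  rcases lt_trichotomy (s x i) 0 with h2 | h2 | h2
  · simp [sign_neg h2]
  · rw [ct_zero_of hk t x i h2]; simp
  · simp [sign_pos h2]

/-- the homotopy -/
noncomputable def H (hk : 2 ≤ k) (p : unitInterval × X k) : X k :=
  build (ct p.1 p.2) (st p.1 p.2) (ct_st hk p.1.2.1 p.1.2.2 p.2)
    (ct_inj hk p.1.2.1 p.1.2.2 p.2)

lemma lt_loc (x : X k) (i j : Fin k) : ∀ᶠ y in 𝓝 x, (c y i < c y j ↔ c x i < c x j) := by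
  by_cases hij : i = j
  · subst hij; simp
  rcases lt_or_gt_of_ne (c_inj x hij) with h | h
  · filter_upwards [(c_cont i).continuousAt.eventually_lt (c_cont j).continuousAt h] with y hy
    simp [hy, h]
  · filter_upwards [(c_cont j).continuousAt.eventually_lt (c_cont i).continuousAt h] with y hy
    simp [hy.not_gt, h.not_gt]

lemma rk_loc (x : X k) : ∀ᶠ y in 𝓝 x, ∀ i, rk y i = rk x i := by
  have : ∀ᶠ y in 𝓝 x, ∀ i j, (c y i < c y j ↔ c x i < c x j) := by
    rw [Filter.eventually_all]; intro i
    rw [Filter.eventually_all]; intro j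
    exact lt_loc x i j
  filter_upwards [this] with y hy i
  unfold rk
  congr 1
  ext j
  simp [hy]

lemma sign_loc (x : X k) (i : Fin k) (h : s x i ≠ 0) :
    ∀ᶠ y in 𝓝 x, SignType.sign (s y i) = SignType.sign (s x i) := by
  rcases lt_or_gt_of_ne h with h | h
  · filter_upwards [(s_cont i).continuousAt.eventually_lt continuousAt_const h] with y hy
    rw [sign_neg h, sign_neg hy]
  · filter_upwards [continuousAt_const.eventually_lt (s_cont i).continuousAt h] with y hy
    rw [sign_pos h, sign_pos hy]

lemma ct_cont (i : Fin k) : Continuous (fun p : unitInterval × X k => ct p.1 p.2 i) := by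
  have h : Continuous (fun p : unitInterval × X k => (rk p.2 i : ℝ)) := by
    have : Continuous (fun x : X k => (rk x i : ℝ)) := by
      rw [continuous_iff_continuousAt]
      intro x
      apply (continuousAt_const (y := (rk x i : ℝ))).congr
      filter_upwards [rk_loc x] with y hy
      rw [hy]
    exact this.comp continuous_snd
  have h2 : Continuous (fun p : unitInterval × X k => c p.2 i) := (c_cont i).comp continuous_snd
  unfold ct tg
  fun_prop

lemma st_cont (hk : 2 ≤ k) (i : Fin k) :
    Continuous (fun p : unitInterval × X k => st p.1 p.2 i) := by
  have h : Continuous (fun p : unitInterval × X k => √(1 - ct p.1 p.2 i ^ 2)) := by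
    have := ct_cont (k := k) i
    fun_prop
  rw [continuous_iff_continuousAt]
  rintro ⟨t, x⟩
  by_cases hs : s x i = 0
  · have e : st t x i = 0 := by unfold st; simp [hs]
    have e2 : √(1 - ct t x i ^ 2) = 0 := by rw [ct_zero_of hk t x i hs]; simp
    have h3 := h.continuousAt (x := (t, x))
    unfold ContinuousAt at h3 ⊢
    simp only [e, e2] at h3 ⊢
    refine squeeze_zero_norm ?_ h3
    rintro ⟨u, y⟩
    unfold st
    rw [norm_mul, Real.norm_of_nonneg (Real.sqrt_nonneg _)]
    apply mul_le_of_le_one_left (Real.sqrt_nonneg _)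
    rcases SignType.sign (s y i) <;> simp
  · apply ((continuousAt_const (y := (SignType.sign (s x i) : ℝ))).mul
      h.continuousAt).congr
    filter_upwards [(continuous_snd.tendsto (t, x)).eventually (sign_loc x i hs)] with p hp
    simp only [st]
    rw [← hp]
    rfl

lemma H_cont (hk : 2 ≤ k) : Continuous (H (k := k) hk) := by
  apply Continuous.subtype_mk
  apply continuous_pi
  intro i
  apply Continuous.subtype_mk
  exact Complex.equivRealProdCLM.symm.continuous.comp ((ct_cont i).prodMk (st_cont hk i))

/-- middle positions -/
abbrev Mid (k : ℕ) : Type := {p : Fin k // 0 < p.val ∧ p.val < k - 1}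

/-- the discrete model -/
abbrev D (k : ℕ) : Type := Equiv.Perm (Fin k) × (Mid k → Bool)

lemma card_D (hk : 2 ≤ k) : Fintype.card (D k) = Nat.factorial k * 2 ^ (k - 2) := by
  have e : Mid k ≃ Fin (k - 2) :=
    { toFun := fun p => ⟨p.1.val - 1, by have := p.2; omega⟩
      invFun := fun q => ⟨⟨q.val + 1, by omega⟩, by simp, by simp; omega⟩
      left_inv := fun p => by
        have := p.2; apply Subtype.ext; apply Fin.ext; simp; omega
      right_inv := fun q => by simp }
  simp [Fintype.card_perm, Fintype.card_congr e]

/-- discrete invariant -/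
noncomputable def pr (x : X k) : D k :=
  (rp x, fun p => decide (0 < s x ((rp x).symm p.1)))

lemma mid_ne (x : X k) (i : Fin k) (h : 0 < rk x i ∧ rk x i < k - 1) : s x i ≠ 0 := by
  intro h0
  rcases s_zero x i h0 with ⟨_, h2⟩ | ⟨_, h2⟩ <;> omega

lemma mid_ne' (x : X k) (p : Mid k) : s x ((rp x).symm p.1) ≠ 0 := by
  apply mid_ne
  rw [← rp_val]; simpa using p.2

lemma pr_cont : @Continuous (X k) (D k) _ ⊥ pr := by
  letI : TopologicalSpace (D k) := ⊥
  rw [continuous_iff_continuousAt]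
  intro x
  apply (continuousAt_const (y := pr x)).congr
  have : ∀ᶠ y in 𝓝 x, ∀ p : Mid k, SignType.sign (s y ((rp x).symm p.1)) =
      SignType.sign (s x ((rp x).symm p.1)) := by
    rw [Filter.eventually_all]
    intro p
    exact sign_loc x _ (mid_ne' x p)
  filter_upwards [rk_loc x, this] with y h1 h2
  have h3 : rp y = rp x := by
    ext i; rw [rp_val, rp_val, h1]
  unfold pr
  rw [h3]
  congr 1
  funext p
  rw [decide_eq_decide, ← sign_eq_one_iff, ← sign_eq_one_iff, h2]

/-- sign of position -/
def sg (d : D k) (i : Fin k) : ℝ :=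
  if h : 0 < (d.1 i).val ∧ (d.1 i).val < k - 1 then (if d.2 ⟨d.1 i, h⟩ then 1 else -1) else 1

lemma sg_sq (d : D k) (i : Fin k) : sg d i ^ 2 = 1 := by
  unfold sg; split_ifs <;> norm_num

/-- section -/
noncomputable def sec (hk : 2 ≤ k) (d : D k) : X k :=
  build (fun i => tg k (d.1 i)) (fun i => sg d i * √(1 - tg k (d.1 i) ^ 2))
    (fun i => by
      have := tg_abs hk (d.1 i).2
      rw [mul_pow, sg_sq, Real.sq_sqrt (by nlinarith)]; ring)
    (fun i j hij h => hij (d.1.injective (Fin.ext ((tg_mono hk).injective h))))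

lemma c_sec (hk : 2 ≤ k) (d : D k) (i : Fin k) : c (sec hk d) i = tg k (d.1 i) := rfl
lemma s_sec (hk : 2 ≤ k) (d : D k) (i : Fin k) :
    s (sec hk d) i = sg d i * √(1 - tg k (d.1 i) ^ 2) := rfl

lemma rp_sec (hk : 2 ≤ k) (d : D k) : rp (sec hk d) = d.1 := by
  classical
  ext i
  rw [rp_val]
  unfold rk
  simp only [c_sec, (tg_mono hk).lt_iff_lt]
  rw [← Finset.card_map d.1.toEmbedding]
  have : (Finset.univ.filter (fun j => (d.1 j).val < (d.1 i).val)).map d.1.toEmbedding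
      = Finset.Iio (d.1 i) := by
    ext j
    simp only [Finset.mem_map_equiv, Finset.mem_filter, Finset.mem_univ, true_and,
      Equiv.apply_symm_apply, Finset.mem_Iio, Fin.lt_def]
  rw [this, Fin.card_Iio]

lemma pr_sec (hk : 2 ≤ k) (d : D k) : pr (sec hk d) = d := by
  unfold pr
  rw [rp_sec]
  refine Prod.ext rfl ?_
  funext p
  have h1 : -1 < tg k p.1 := by rw [← tg_zero (k := k)]; exact tg_mono hk p.2.1
  have h2 : tg k p.1 < 1 := by rw [← tg_last hk]; exact tg_mono hk p.2.2
  have h3 : 0 < √(1 - tg k p.1 ^ 2) := Real.sqrt_pos.2 (by nlinarith)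
  have h4 : sg d (d.1.symm p.1) = if d.2 p then 1 else -1 := by
    unfold sg
    simp [p.2]
  simp only [s_sec, Equiv.apply_symm_apply, h4]
  cases d.2 p
  · simp
  · simpa using h3

lemma H_one (hk : 2 ≤ k) (x : X k) : H hk (1, x) = sec hk (pr x) := by
  apply X_ext
  · intro i
    rw [c_sec]
    change ct 1 x i = tg k (rk x i)
    simp [ct]
  · intro i
    rw [s_sec]
    change st 1 x i = sg (pr x) i * √(1 - tg k (rk x i) ^ 2)
    have e : ct 1 x i = tg k (rk x i) := by simp [ct]
    unfold st
    rw [e]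
    by_cases h : 0 < rk x i ∧ rk x i < k - 1
    · congr 1
      have h' : 0 < ((pr x).1 i).val ∧ ((pr x).1 i).val < k - 1 := h
      unfold sg
      rw [dif_pos h']
      have h2 : (pr x).2 ⟨(pr x).1 i, h'⟩ = decide (0 < s x i) := by
        simp [pr]
      rw [h2]
      rcases lt_or_gt_of_ne (mid_ne x i h) with h3 | h3
      · simp [sign_neg h3, h3.not_gt]
      · simp [sign_pos h3, h3]
    · have h0 : tg k (rk x i) ^ 2 = 1 := by
        have := rk_lt x i
        rcases (by omega : rk x i = 0 ∨ rk x i = k - 1) with h1 | h1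
        · rw [h1, tg_zero]; norm_num
        · rw [h1, tg_last hk]; norm_num
      rw [h0]; simp

lemma H_zero (hk : 2 ≤ k) (x : X k) : H hk (0, x) = x := by
  apply X_ext
  · intro i
    change ct 0 x i = _
    simp [ct]
  · intro i
    change st 0 x i = _
    have e : ct 0 x i = c x i := by simp [ct]
    have h2 := sq_add x i
    have h3 : 1 - c x i ^ 2 = s x i ^ 2 := by linarith
    unfold st
    rw [e, h3, Real.sqrt_sq_eq_abs, sign_mul_abs]

theorem main (k : ℕ) (hk : 2 ≤ k) :
    Nonempty (ContinuousMap.HomotopyEquiv (X k) (Fin (Nat.factorial k * 2 ^ (k - 2)))) := by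
  let e : D k ≃ Fin (Nat.factorial k * 2 ^ (k - 2)) := Fintype.equivFinOfCardEq (card_D hk)
  have hp : Continuous (fun x : X k => e (pr x)) := by
    letI : TopologicalSpace (D k) := ⊥
    haveI : DiscreteTopology (D k) := ⟨rfl⟩
    exact (continuous_of_discreteTopology (f := e)).comp pr_cont
  let f : C(X k, Fin (Nat.factorial k * 2 ^ (k - 2))) := ⟨fun x => e (pr x), hp⟩
  let g : C(Fin (Nat.factorial k * 2 ^ (k - 2)), X k) :=
    ⟨fun n => sec hk (e.symm n), continuous_of_discreteTopology⟩
  refine ⟨⟨f, g, ?_, ?_⟩⟩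
  · symm
    refine ⟨⟨⟨H hk, H_cont hk⟩, ?_, ?_⟩⟩
    · intro x; exact H_zero hk x
    · intro x
      simp [H_one, f, g]
  · have : f.comp g = ContinuousMap.id _ := by
      ext n
      simp [f, g, pr_sec]
    rw [this]

end OrbConf

/-- The orbit configuration space `F_{ℤ/2}(S¹, k)`, where the nontrivial
element of `ℤ/2` acts on the unit circle in `ℂ` by complex conjugation, is homotopy
equivalent to a discrete space with exactly `k! * 2^(k-2)` points. -/
theorem orbit_config_circle_conj_homotopy_discrete (k : ℕ) (hk : 2 ≤ k) :
    Nonempty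
      (ContinuousMap.HomotopyEquiv
        {x : Fin k → Metric.sphere (0 : ℂ) 1 //
          ∀ i j : Fin k, i ≠ j →
            (x i : ℂ) ≠ (x j : ℂ) ∧ (x i : ℂ) ≠ (starRingEnd ℂ) (x j : ℂ)}
        (Fin (Nat.factorial k * 2 ^ (k - 2)))) := by
  exact OrbConf.main k hk
end

section
/- For every integer k ≥ 1, the following identity holds in the polynomial ring ℤ[t]: the sum over all simple graphs G on the vertex set Fin k of (−1)^{e(G)} · t^{c(G)} equals the falling factorial ∏_{l=0}^{k−1} (t − l), where e(G) is the number of edges of G and c(G) is the number of connected components of G. -/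
open scoped Classical

lemma card_maps_aux {V : Type} [Fintype V] (G : SimpleGraph V) (n : ℕ) :
    n ^ Nat.card G.ConnectedComponent =
      (Finset.univ.filter (fun f : V → Fin n => ∀ u v, G.Adj u v → f u = f v)).card := by
  have e : {f : V → Fin n // ∀ u v, G.Adj u v → f u = f v} ≃ (G.ConnectedComponent → Fin n) :=
    { toFun := fun f c => SimpleGraph.ConnectedComponent.lift f.1 (by
        intro v w p _
        induction p with
        | nil => rfl
        | cons h p ih =>
          rename_i hp
          rw [f.2 _ _ h]
          exact ih (by simp_all [SimpleGraph.Walk.cons_isPath_iff])) c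
      invFun := fun g => ⟨fun v => g (G.connectedComponentMk v), fun u v h => by
        exact congrArg g (SimpleGraph.ConnectedComponent.sound h.reachable)⟩
      left_inv := fun f => by ext v; rfl
      right_inv := fun g => by
        funext c
        induction c using SimpleGraph.ConnectedComponent.ind
        rfl }
  rw [← Fintype.card_subtype, Fintype.card_congr e]
  simp [Nat.card_eq_fintype_card]

lemma sum_le_aux {V : Type} [Fintype V] (H : SimpleGraph V) :
    ∑ G ∈ Finset.univ.filter (fun G : SimpleGraph V => G ≤ H), (-1 : ℤ) ^ (Nat.card G.edgeSet) =
      if H = ⊥ then 1 else 0 := by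
  have h := Finset.sum_powerset_neg_one_pow_card (x := H.edgeFinset)
  simp only [SimpleGraph.edgeFinset_eq_empty] at h
  rw [← h]
  refine Finset.sum_bij (fun G _ => G.edgeFinset) ?_ ?_ ?_ ?_
  · intro G hG
    simpa using hG
  · intro G _ G' _ h
    exact SimpleGraph.edgeFinset_inj.1 h
  · intro s hs
    have hs' : (s : Set (Sym2 V)) ⊆ H.edgeSet := by
      intro x hx
      simpa using Finset.mem_powerset.1 hs hx
    have hE : (SimpleGraph.fromEdgeSet (s : Set (Sym2 V))).edgeSet = s := by
      rw [SimpleGraph.edgeSet_fromEdgeSet]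
      ext x
      simp only [Set.mem_diff, and_iff_left_iff_imp]
      intro hx
      exact H.not_isDiag_of_mem_edgeSet (hs' hx)
    refine ⟨SimpleGraph.fromEdgeSet (s : Set (Sym2 V)), ?_, ?_⟩
    · simp only [Finset.mem_filter, Finset.mem_univ, true_and]
      rw [← SimpleGraph.edgeSet_subset_edgeSet, hE]
      exact hs'
    · rw [← Finset.coe_inj, SimpleGraph.coe_edgeFinset, hE]
  · intro G _
    rw [Nat.card_eq_fintype_card, SimpleGraph.edgeFinset_card]

/-- For `k ≥ 1`, in `ℤ[t]` the sum over all simple graphs `G` on `Fin k`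
of `(-1)^{e(G)} · t^{c(G)}` equals the falling factorial `∏_{l=0}^{k-1} (t - l)`,
where `e(G)` is the number of edges and `c(G)` the number of connected components. -/
theorem sum_graphs_sign_pow_components_eq_falling_factorial (k : ℕ) (hk : 1 ≤ k) :
    ∑ G : SimpleGraph (Fin k),
        (-1 : Polynomial ℤ) ^ (Nat.card G.edgeSet) *
          (Polynomial.X : Polynomial ℤ) ^ (Nat.card G.ConnectedComponent) =
      ∏ l ∈ Finset.range k, ((Polynomial.X : Polynomial ℤ) - Polynomial.C (l : ℤ)) := by
  apply Polynomial.eq_of_infinite_eval_eq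
  refine (Set.infinite_range_of_injective (Nat.cast_injective (R := ℤ))).mono ?_
  rintro _ ⟨n, rfl⟩
  simp only [Set.mem_ofPred_eq, Polynomial.eval_finsetSum, Polynomial.eval_mul,
    Polynomial.eval_pow, Polynomial.eval_neg, Polynomial.eval_one, Polynomial.eval_X,
    Polynomial.eval_prod, Polynomial.eval_sub, Polynomial.eval_C]
  rw [← descPochhammer_eval_eq_prod_range, descPochhammer_eval_eq_descFactorial]
  have hH : ∀ f : Fin k → Fin n, ∃ H : SimpleGraph (Fin k),
      ∀ u v, H.Adj u v ↔ u ≠ v ∧ f u = f v := fun f =>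
    ⟨{ Adj := fun u v => u ≠ v ∧ f u = f v
       symm := ⟨fun u v h => ⟨h.1.symm, h.2.symm⟩⟩
       loopless := ⟨fun u h => h.1 rfl⟩ }, fun u v => Iff.rfl⟩
  choose H hH using hH
  have hle : ∀ f G, (∀ u v, G.Adj u v → f u = f v) ↔ G ≤ H f := fun f G =>
    ⟨fun h u v a => (hH f u v).2 ⟨a.ne, h u v a⟩, fun h u v a => ((hH f u v).1 (h a)).2⟩
  have hbot : ∀ f, H f = ⊥ ↔ Function.Injective f := by
    intro f
    constructor
    · intro h u v e
      by_contra hne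
      have := (hH f u v).2 ⟨hne, e⟩
      simp [h] at this
    · intro h
      ext u v
      simp only [hH, SimpleGraph.bot_adj, iff_false, not_and]
      exact fun hne e => hne (h e)
  calc _ = ∑ G : SimpleGraph (Fin k), ∑ f : Fin k → Fin n,
        if G ≤ H f then (-1 : ℤ) ^ (Nat.card G.edgeSet) else 0 := by
        refine Finset.sum_congr rfl fun G _ => ?_
        rw [← Nat.cast_pow, card_maps_aux, ← Finset.sum_filter, Finset.sum_const]
        simp only [hle, nsmul_eq_mul]
        rw [mul_comm]
        congr!
    _ = ∑ f : Fin k → Fin n, if Function.Injective f then (1 : ℤ) else 0 := by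
        rw [Finset.sum_comm]
        refine Finset.sum_congr rfl fun f _ => ?_
        have h := sum_le_aux (H f)
        simp only [hbot] at h
        rw [← Finset.sum_filter]
        convert h
    _ = _ := by
        rw [← Finset.sum_filter, Finset.sum_const, ← Fintype.card_subtype,
          Fintype.card_congr (Equiv.subtypeInjectiveEquivEmbedding _ _),
          Fintype.card_embedding_eq]
        simp
end

section
/- Let k ≥ 1 and let I = (k₁, …, k_s) be a partition of k, i.e. a multiset of positive integers with sum k and s parts. Define C_I to be the sum of (−1)^{e(G)} over all simple graphs G on the vertex set Fin k whose multiset of connected component cardinalities equals I. Then (∏_m r_m!) · (k₁·k₂···k_s) · C_I = (−1)^{k−s} · k!, where for each distinct part size m of I, r_m denotes the multiplicity of m in I; equivalently C_I = k!·(−1)^{k−s} / (r₁!···r_s!·k₁k₂···k_s). -/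
open scoped Classical

lemma aux_moebius {α β P : Type*} [Fintype α] [Fintype β] [Fintype P] [PartialOrder P]
    (r : α → P) (s : β → P) (u : α → ℤ) (v : β → ℤ)
    (h : ∀ p, ∑ a ∈ Finset.univ.filter (fun a => r a ≤ p), u a
      = ∑ b ∈ Finset.univ.filter (fun b => s b ≤ p), v b) (p : P) :
    ∑ a ∈ Finset.univ.filter (fun a => r a = p), u a
      = ∑ b ∈ Finset.univ.filter (fun b => s b = p), v b := by
  have key : ∀ {γ : Type _} [Fintype γ] (r : γ → P) (u : γ → ℤ) (p : P),
      ∑ a ∈ Finset.univ.filter (fun a => r a ≤ p), u a =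
      ∑ q ∈ Finset.univ.filter (fun q => q < p),
        ∑ a ∈ Finset.univ.filter (fun a => r a = q), u a
       + ∑ a ∈ Finset.univ.filter (fun a => r a = p), u a := by
    intro γ _ r u p
    have h1 := Finset.sum_fiberwise_of_maps_to
      (s := Finset.univ.filter (fun a => r a ≤ p)) (t := Finset.univ.filter (fun q => q ≤ p))
      (g := r) (fun i hi => by simpa using hi) u
    rw [← h1]
    have h2 : Finset.univ.filter (fun q => q ≤ p) =
        insert p (Finset.univ.filter (fun q => q < p)) := by
      ext q; simp [le_iff_lt_or_eq, or_comm]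
    have h3 : ∀ q ∈ Finset.univ.filter (fun q => q ≤ p),
        ∑ a ∈ (Finset.univ.filter (fun a => r a ≤ p)).filter (fun a => r a = q), u a
        = ∑ a ∈ Finset.univ.filter (fun a => r a = q), u a := by
      intro q hq
      apply Finset.sum_congr _ (fun _ _ => rfl)
      ext a
      simp at hq ⊢
      rintro rfl; exact hq
    rw [Finset.sum_congr rfl h3, h2, Finset.sum_insert (by simp), add_comm]
  have key' : ∀ {γ : Type _} [Fintype γ] (r : γ → P) (u : γ → ℤ) (p : P),
      ∑ a ∈ Finset.univ.filter (fun a => r a ≤ p), u a =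
      ∑ q ∈ Finset.univ.filter (fun q => q < p),
        ∑ a ∈ Finset.univ.filter (fun a => r a = q), u a
       + ∑ a ∈ Finset.univ.filter (fun a => r a = p), u a := by
    intro γ _ r u p
    have h1 := Finset.sum_fiberwise_of_maps_to
      (s := Finset.univ.filter (fun a => r a ≤ p)) (t := Finset.univ.filter (fun q => q ≤ p))
      (g := r) (fun i hi => by simpa using hi) u
    rw [← h1]
    have h2 : Finset.univ.filter (fun q => q ≤ p) =
        insert p (Finset.univ.filter (fun q => q < p)) := by
      ext q; simp [le_iff_lt_or_eq, or_comm]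
    have h3 : ∀ q ∈ Finset.univ.filter (fun q => q ≤ p),
        ∑ a ∈ (Finset.univ.filter (fun a => r a ≤ p)).filter (fun a => r a = q), u a
        = ∑ a ∈ Finset.univ.filter (fun a => r a = q), u a := by
      intro q hq
      apply Finset.sum_congr _ (fun _ _ => rfl)
      ext a
      simp at hq ⊢
      rintro rfl; exact hq
    rw [Finset.sum_congr rfl h3, h2, Finset.sum_insert (by simp), add_comm]
  induction p using (wellFounded_lt (α := P)).induction with
  | _ p ih =>
    have := h p
    rw [key r u p, key' s v p] at this
    rw [Finset.sum_congr rfl (fun q hq => ih q (by simpa using hq))] at this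
    exact add_left_cancel this

section
variable {V : Type} [Fintype V] [DecidableEq V]

lemma finite_setoid_aux (V : Type) [Finite V] : Finite (Setoid V) :=
  Finite.of_injective (fun p : Setoid V => (fun x y => p x y : V → V → Prop))
    (fun p q h => Setoid.ext (fun x y => iff_of_eq (congrFun (congrFun h x) y)))

lemma reach_le_iff (G : SimpleGraph V) (p : Setoid V) :
    G.reachableSetoid ≤ p ↔ ∀ x y, G.Adj x y → p x y := by
  constructor
  · intro h x y hxy
    exact h (show G.Reachable x y from hxy.reachable)
  · rintro h x y ⟨w⟩
    induction w with
    | nil => exact p.refl _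
    | cons hxy _ ih => exact p.trans (h _ _ hxy) ih

lemma cycle_le_iff (σ : Equiv.Perm V) (p : Setoid V) :
    Equiv.Perm.SameCycle.setoid σ ≤ p ↔ ∀ x, p x (σ x) := by
  constructor
  · intro h x
    exact h (show σ.SameCycle x (σ x) from ⟨1, by simp⟩)
  · intro h x y hxy
    obtain ⟨n, -, rfl⟩ := Equiv.Perm.SameCycle.exists_pow_eq' (show σ.SameCycle x y from hxy)
    clear hxy
    induction n with
    | zero => exact p.refl _
    | succ n ih => rw [pow_succ']; exact p.trans ih (h _)

lemma exists_of_ne_bot (p : Setoid V) (hp : p ≠ ⊥) : ∃ a b, a ≠ b ∧ p a b := by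
  by_contra! h
  apply hp
  ext x y
  constructor
  · intro hxy
    by_contra hne
    exact h x y hne hxy
  · rintro rfl
    exact p.refl _

lemma sum_graph (p : Setoid V) :
    ∑ G ∈ Finset.univ.filter (fun G : SimpleGraph V => G.reachableSetoid ≤ p),
      (-1 : ℤ) ^ (Nat.card G.edgeSet) = if p = ⊥ then 1 else 0 := by
  split_ifs with hp
  · subst hp
    have : Finset.univ.filter (fun G : SimpleGraph V => G.reachableSetoid ≤ ⊥) = {⊥} := by
      ext G
      simp only [Finset.mem_filter, Finset.mem_univ, true_and, Finset.mem_singleton, reach_le_iff]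
      constructor
      · intro h
        ext x y
        simp only [SimpleGraph.bot_adj, iff_false]
        intro hxy
        exact hxy.ne (h x y hxy)
      · rintro rfl x y hxy
        exact hxy.elim
    rw [this]
    simp
  · obtain ⟨a, b, hab, hpab⟩ := exists_of_ne_bot p hp
    have hE : (SimpleGraph.edge a b).edgeSet = {s(a, b)} := by
      ext e
      induction e with | _ x y => 
      simp [SimpleGraph.edge_adj]
      grind
    have hcard : ∀ G : SimpleGraph V, ¬ G.Adj a b →
        Nat.card (G ⊔ SimpleGraph.edge a b).edgeSet = Nat.card G.edgeSet + 1 := by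
      intro G hG
      rw [SimpleGraph.edgeSet_sup, hE, Nat.card_coe_set_eq, Nat.card_coe_set_eq,
        Set.union_singleton, Set.ncard_insert_of_notMem (by simpa using hG) (Set.toFinite _)]
    have hcard2 : ∀ G : SimpleGraph V, G.Adj a b →
        Nat.card G.edgeSet = Nat.card (G \ SimpleGraph.edge a b).edgeSet + 1 := by
      intro G hG
      have hle : SimpleGraph.edge a b ≤ G := by
        intro x y hxy
        rw [SimpleGraph.edge_adj] at hxy
        rcases hxy with ⟨⟨rfl, rfl⟩ | ⟨rfl, rfl⟩, _⟩
        · exact hG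
        · exact hG.symm
      rw [← hcard _ (by simp [SimpleGraph.edge_adj, hab]), sdiff_sup_cancel hle]
    refine Finset.sum_involution
      (fun G _ => if G.Adj a b then G \ SimpleGraph.edge a b else G ⊔ SimpleGraph.edge a b)
      ?_ ?_ ?_ ?_
    · intro G _
      split_ifs with h
      · rw [hcard2 G h]; ring
      · rw [hcard G h]; ring
    · intro G _ _
      split_ifs with h
      · intro he
        rw [← he] at h
        simp [SimpleGraph.edge_adj, hab] at h
      · intro he
        rw [← he] at h
        simp [SimpleGraph.edge_adj, hab] at h
    · intro G hG
      simp only [Finset.mem_filter, Finset.mem_univ, true_and, reach_le_iff] at hG ⊢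
      intro x y hxy
      split_ifs at hxy with h
      · exact hG x y hxy.1
      · rcases hxy with hxy | hxy
        · exact hG x y hxy
        · rw [SimpleGraph.edge_adj] at hxy
          rcases hxy with ⟨⟨rfl, rfl⟩ | ⟨rfl, rfl⟩, _⟩
          · exact hpab
          · exact p.symm hpab
    · intro G _
      ext x y
      split_ifs with h1 h2 h2 <;> 
        simp [SimpleGraph.edge_adj] at h1 h2 ⊢ <;> 
        grind [SimpleGraph.adj_comm, SimpleGraph.irrefl]

lemma sum_perm (p : Setoid V) :
    ∑ σ ∈ Finset.univ.filter (fun σ : Equiv.Perm V => Equiv.Perm.SameCycle.setoid σ ≤ p),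
      ((Equiv.Perm.sign σ : ℤˣ) : ℤ) = if p = ⊥ then 1 else 0 := by
  split_ifs with hp
  · subst hp
    have : Finset.univ.filter
        (fun σ : Equiv.Perm V => Equiv.Perm.SameCycle.setoid σ ≤ ⊥) = {1} := by
      ext σ
      simp only [Finset.mem_filter, Finset.mem_univ, true_and, Finset.mem_singleton, cycle_le_iff]
      constructor
      · intro h
        ext x
        exact (h x).symm
      · rintro rfl x
        exact rfl
    rw [this]
    simp
  · obtain ⟨a, b, hab, hpab⟩ := exists_of_ne_bot p hp
    have hsw : ∀ y, p y (Equiv.swap a b y) := by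
      intro y
      rw [Equiv.swap_apply_def]
      split_ifs with h1 h2
      · subst h1; exact hpab
      · subst h2; exact p.symm hpab
      · exact p.refl _
    refine Finset.sum_involution (fun σ _ => Equiv.swap a b * σ) ?_ ?_ ?_ ?_
    · intro σ _
      simp [Equiv.Perm.sign_swap hab]
    · intro σ _ _ h
      have := mul_eq_right.mp h
      exact hab (Equiv.swap_eq_one_iff.mp this)
    · intro σ hσ
      simp only [Finset.mem_filter, Finset.mem_univ, true_and, cycle_le_iff] at hσ ⊢
      intro x
      exact p.trans (hσ x) (hsw _)
    · intro σ _
      simp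

lemma graph_eq_perm (p : Setoid V) :
    ∑ G ∈ Finset.univ.filter (fun G : SimpleGraph V => G.reachableSetoid = p),
      (-1 : ℤ) ^ (Nat.card G.edgeSet) =
    ∑ σ ∈ Finset.univ.filter (fun σ : Equiv.Perm V => Equiv.Perm.SameCycle.setoid σ = p),
      ((Equiv.Perm.sign σ : ℤˣ) : ℤ) := by
  have := finite_setoid_aux V
  have : Fintype (Setoid V) := Fintype.ofFinite _
  exact aux_moebius _ _ _ _ (fun p => by rw [sum_graph, sum_perm]) p

/-- The finset of classes. -/
noncomputable def classFinset (p : Setoid V) : Finset (Finset V) :=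
  Finset.univ.image (fun x => Finset.univ.filter (fun y => p x y))

lemma graph_eq_perm_sizes (I : Multiset ℕ) :
    ∑ G ∈ Finset.univ.filter
        (fun G : SimpleGraph V => (classFinset G.reachableSetoid).val.map Finset.card = I),
      (-1 : ℤ) ^ (Nat.card G.edgeSet) =
    ∑ σ ∈ Finset.univ.filter (fun σ : Equiv.Perm V =>
        (classFinset (Equiv.Perm.SameCycle.setoid σ)).val.map Finset.card = I),
      ((Equiv.Perm.sign σ : ℤˣ) : ℤ) := by
  have := finite_setoid_aux V
  have : Fintype (Setoid V) := Fintype.ofFinite _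
  rw [← Finset.sum_fiberwise_of_maps_to
    (t := Finset.univ.filter (fun p : Setoid V => (classFinset p).val.map Finset.card = I))
    (g := fun G : SimpleGraph V => G.reachableSetoid) (fun i hi => by simpa using hi),
    ← Finset.sum_fiberwise_of_maps_to
    (t := Finset.univ.filter (fun p : Setoid V => (classFinset p).val.map Finset.card = I))
    (g := fun σ : Equiv.Perm V => Equiv.Perm.SameCycle.setoid σ) (fun i hi => by simpa using hi)]
  apply Finset.sum_congr rfl
  intro p hp
  have := graph_eq_perm p
  simp only [Finset.mem_filter, Finset.mem_univ, true_and] at hp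
  rw [Finset.filter_filter, Finset.filter_filter]
  convert this using 2
  · ext G; simp; rintro rfl; exact hp
  · ext G; simp; rintro rfl; exact hp

lemma graph_sizes (G : SimpleGraph V) [Fintype G.ConnectedComponent] :
    (Finset.univ.val.map fun c : G.ConnectedComponent => Nat.card c.supp)
      = (classFinset G.reachableSetoid).val.map Finset.card := by
  have h : classFinset G.reachableSetoid =
      Finset.univ.image (fun c : G.ConnectedComponent => c.supp.toFinset) := by
    ext s
    simp only [classFinset, Finset.mem_image, Finset.mem_univ, true_and]
    have hx : ∀ x, Finset.univ.filter (fun y => G.reachableSetoid x y) =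
        (G.connectedComponentMk x).supp.toFinset := by
      intro x
      ext y
      simp only [Finset.mem_filter, Finset.mem_univ, true_and, Set.mem_toFinset,
        SimpleGraph.ConnectedComponent.mem_supp_iff, SimpleGraph.ConnectedComponent.eq]
      exact ⟨fun h => SimpleGraph.Reachable.symm h, fun h => SimpleGraph.Reachable.symm h⟩
    constructor
    · rintro ⟨x, rfl⟩
      exact ⟨_, (hx x).symm⟩
    · rintro ⟨c, rfl⟩
      induction c using SimpleGraph.ConnectedComponent.ind with
      | _ x => exact ⟨x, hx x⟩
  rw [h, Finset.image_val_of_injOn, Multiset.map_map]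
  · apply Multiset.map_congr rfl
    intro c _
    simp [Nat.card_eq_fintype_card]
  · intro c _ d _ hcd
    exact SimpleGraph.ConnectedComponent.supp_injective (Set.toFinset_inj.mp hcd)

lemma perm_sizes (σ : Equiv.Perm V) :
    (classFinset (Equiv.Perm.SameCycle.setoid σ)).val.map Finset.card = σ.partition.parts := by
  have h1 : ∀ x, σ x ≠ x → Finset.univ.filter (fun y => Equiv.Perm.SameCycle.setoid σ x y) =
      (σ.cycleOf x).support := by
    intro x hx
    ext y
    simp only [Finset.mem_filter, Finset.mem_univ, true_and]
    rw [Equiv.Perm.mem_support_cycleOf_iff' hx]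
    rfl
  have h2 : ∀ x, σ x = x → Finset.univ.filter (fun y => Equiv.Perm.SameCycle.setoid σ x y) =
      {x} := by
    intro x hx
    ext y
    simp only [Finset.mem_filter, Finset.mem_univ, true_and, Finset.mem_singleton]
    constructor
    · rintro ⟨n, rfl⟩
      exact Equiv.Perm.zpow_apply_eq_self_of_apply_eq_self hx n
    · rintro rfl; exact (Equiv.Perm.SameCycle.setoid σ).refl _
  have hdis : Disjoint (σ.cycleFactorsFinset.image Equiv.Perm.support)
      (σ.supportᶜ.image (fun x => ({x} : Finset V))) := by
    rw [Finset.disjoint_left]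
    intro s hs hs'
    simp only [Finset.mem_image] at hs hs'
    obtain ⟨c, hc, rfl⟩ := hs
    obtain ⟨x, hx, hxc⟩ := hs'
    have := (Equiv.Perm.mem_cycleFactorsFinset_iff.mp hc).1.two_le_card_support
    rw [← hxc] at this
    simp at this
  have h : classFinset (Equiv.Perm.SameCycle.setoid σ) =
      (σ.cycleFactorsFinset.image Equiv.Perm.support).disjUnion
      (σ.supportᶜ.image (fun x => ({x} : Finset V))) hdis := by
    ext s
    simp only [classFinset, Finset.mem_image, Finset.mem_univ, true_and, Finset.mem_disjUnion,
      Finset.mem_compl, Equiv.Perm.mem_support, not_not]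
    constructor
    · rintro ⟨x, rfl⟩
      by_cases hx : σ x = x
      · right; exact ⟨x, hx, (h2 x hx).symm⟩
      · left
        exact ⟨σ.cycleOf x, Equiv.Perm.cycleOf_mem_cycleFactorsFinset_iff.mpr (by simpa using hx),
          (h1 x hx).symm⟩
    · rintro (⟨c, hc, rfl⟩ | ⟨x, hx, rfl⟩)
      · obtain ⟨x, hx⟩ := (Equiv.Perm.mem_cycleFactorsFinset_iff.mp hc).1.nonempty_support
        have hx' := Equiv.Perm.mem_cycleFactorsFinset_support_le hc hx
        refine ⟨x, ?_⟩
        rw [h1 x (by simpa using hx'), ← Equiv.Perm.cycle_is_cycleOf hx hc]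
      · exact ⟨x, h2 x hx⟩
  rw [h, Finset.disjUnion_val, Multiset.map_add, Equiv.Perm.parts_partition]
  congr 1
  · rw [Finset.image_val_of_injOn, Multiset.map_map]
    · rfl
    · intro c hc d hd hcd
      obtain ⟨x, hx⟩ := (Equiv.Perm.mem_cycleFactorsFinset_iff.mp hc).1.nonempty_support
      have hx' : x ∈ d.support := by rw [← show c.support = d.support from hcd]; exact hx
      rw [Equiv.Perm.cycle_is_cycleOf hx hc, Equiv.Perm.cycle_is_cycleOf hx' hd]
  · rw [Finset.image_val_of_injOn, Multiset.map_map]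
    · simp [Function.comp_def, Finset.card_compl]
    · intro c _ d _ hcd
      simpa using hcd

end

theorem sign_sum_graphs_with_component_sizes (k : ℕ) (hk : 1 ≤ k) (I : Multiset ℕ)
    (hpos : ∀ m ∈ I, 0 < m) (hsum : I.sum = k) :
    ((∏ m ∈ I.toFinset, Nat.factorial (I.count m) : ℕ) : ℤ) * (I.prod : ℤ) *
        (∑ G ∈ Finset.univ.filter
            (fun G : SimpleGraph (Fin k) =>
              (Finset.univ.val.map fun c : G.ConnectedComponent => Nat.card c.supp) = I),
          (-1 : ℤ) ^ (Nat.card G.edgeSet)) =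
      (-1 : ℤ) ^ (k - Multiset.card I) * (Nat.factorial k : ℤ) := by
  have e1 : (∑ G ∈ Finset.univ.filter
            (fun G : SimpleGraph (Fin k) =>
              (Finset.univ.val.map fun c : G.ConnectedComponent => Nat.card c.supp) = I),
          (-1 : ℤ) ^ (Nat.card G.edgeSet)) = 
      ∑ σ ∈ Finset.univ.filter (fun σ : Equiv.Perm (Fin k) => σ.partition.parts = I),
      ((Equiv.Perm.sign σ : ℤˣ) : ℤ) := by
    have := graph_eq_perm_sizes (V := Fin k) I
    simp only [perm_sizes, ← graph_sizes] at this
    convert this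
  rw [e1]
  set m := I.filter (fun n => 2 ≤ n) with hm
  set r := I.count 1 with hr
  have hI : I = m + Multiset.replicate r 1 := by
    rw [hr, ← Multiset.filter_eq', hm]
    conv_lhs => rw [← Multiset.filter_add_not (fun n => 2 ≤ n) I]
    congr 1
    apply Multiset.filter_congr
    intro x hx
    have := hpos x hx
    omega
  have hm2 : ∀ a ∈ m, 2 ≤ a := fun a ha => (Multiset.mem_filter.mp ha).2
  have hksum : m.sum + r = k := by
    rw [← hsum]; conv_rhs => rw [hI]
    simp
  have hcardI : Multiset.card I = Multiset.card m + r := by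
    conv_lhs => rw [hI]
    simp
  have hprod : I.prod = m.prod := by
    conv_lhs => rw [hI]
    simp
  have hmcard : Multiset.card m ≤ m.sum := by
    simpa using Multiset.card_nsmul_le_sum (a := 1) (s := m) (fun a ha => by have := hm2 a ha; omega)
  have hfact : ∏ n ∈ I.toFinset, Nat.factorial (I.count n) =
      Nat.factorial r * ∏ n ∈ m.toFinset, Nat.factorial (m.count n) := by
    have h1m : 1 ∉ m := fun h => by have := hm2 1 h; omega
    have hsub : I.toFinset ⊆ insert 1 m.toFinset := by
      intro x hx
      rw [Multiset.mem_toFinset, hI] at hx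
      rcases Multiset.mem_add.mp hx with h | h
      · simp [h]
      · simp [Multiset.eq_of_mem_replicate h]
    rw [Finset.prod_subset hsub, Finset.prod_insert (by simpa using h1m)]
    · congr 1
      apply Finset.prod_congr rfl
      intro n hn
      have := hm2 n (by simpa using hn)
      rw [hm, Multiset.count_filter_of_pos this]
    · intro x _ hx
      rw [Multiset.count_eq_zero_of_notMem (by simpa using hx)]
      rfl
  have hfilter : Finset.univ.filter (fun σ : Equiv.Perm (Fin k) => σ.partition.parts = I)
      = Finset.univ.filter (fun σ : Equiv.Perm (Fin k) => σ.cycleType = m) := by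
    ext σ
    simp only [Finset.mem_filter, Finset.mem_univ, true_and]
    constructor
    · intro h
      rw [← Equiv.Perm.filter_parts_partition_eq_cycleType, h]
    · intro h
      rw [Equiv.Perm.parts_partition, ← Equiv.Perm.sum_cycleType, h, Fintype.card_fin]
      conv_rhs => rw [hI]
      congr 2
      omega
  have hsign : ∀ σ ∈ Finset.univ.filter (fun σ : Equiv.Perm (Fin k) => σ.cycleType = m),
      ((Equiv.Perm.sign σ : ℤˣ) : ℤ) = (-1) ^ (k - Multiset.card I) := by
    intro σ hσ
    have hσ' : σ.cycleType = m := by simpa using hσ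
    have e : m.sum + Multiset.card m = (k - Multiset.card I) + 2 * Multiset.card m := by omega
    have := Equiv.Perm.sign_of_cycleType σ
    rw [hσ', e, pow_add, pow_mul] at this
    rw [show Equiv.Perm.sign σ = (-1) ^ (k - Multiset.card I) by convert this using 1; simp]
    simp
  rw [hfilter, Finset.sum_congr rfl hsign, Finset.sum_const, hfact, hprod, nsmul_eq_mul]
  have hc := Equiv.Perm.card_of_cycleType_mul_eq (Fin k) m
  rw [if_pos ⟨by rw [Fintype.card_fin]; omega, hm2⟩, Fintype.card_fin,
    show k - m.sum = r by omega] at hc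
  have hc' : (((Finset.univ.filter
      (fun σ : Equiv.Perm (Fin k) => σ.cycleType = m)).card : ℕ) : ℤ) *
      ((Nat.factorial r : ℤ) * (m.prod : ℤ) * ((∏ n ∈ m.toFinset, Nat.factorial (m.count n) : ℕ) : ℤ))
      = (Nat.factorial k : ℤ) := by
    rw [← hc]
    push_cast
    congr!
  rw [← hc']
  push_cast
  ring
end

section
/- For every integer k ≥ 1, the sum of (−1)^{e(G)} over all connected simple graphs G on the vertex set Fin k equals (−1)^{k−1} · (k−1)!, where e(G) is the number of edges of G. -/
open scoped Classical

/-- The graph joining distinct vertices of the same colour. -/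
def sameColour {V W : Type} (f : V → W) : SimpleGraph V where
  Adj u v := u ≠ v ∧ f u = f v
  symm := ⟨fun _ _ h => ⟨h.1.symm, h.2.symm⟩⟩
  loopless := ⟨fun _ h => h.1 rfl⟩

lemma sum_le_graph {V : Type} [Fintype V] (H : SimpleGraph V) :
    ∑ G : SimpleGraph V, (if G ≤ H then (-1 : ℤ) ^ (Nat.card G.edgeSet) else 0) =
      if H = ⊥ then 1 else 0 := by
  have h := Finset.sum_powerset_neg_one_pow_card (x := H.edgeFinset)
  rw [← Finset.sum_filter]
  have e : (H.edgeFinset = ∅) ↔ H = ⊥ := SimpleGraph.edgeFinset_eq_empty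
  simp only [e] at h
  rw [← h]
  refine Finset.sum_bij' (fun G _ => G.edgeFinset)
    (fun s _ => SimpleGraph.fromEdgeSet (s : Set (Sym2 V))) ?_ ?_ ?_ ?_ ?_
  · intro G hG
    simpa using hG
  · intro s hs
    simp only [Finset.mem_powerset] at hs
    simp only [Finset.mem_filter, Finset.mem_univ, true_and]
    intro u v huv
    rw [SimpleGraph.fromEdgeSet_adj] at huv
    have := hs (by simpa using huv.1)
    simpa using this
  · intro G _
    simp
  · intro s hs
    simp only [Finset.mem_powerset] at hs
    ext x
    simp only [SimpleGraph.mem_edgeFinset, SimpleGraph.edgeSet_fromEdgeSet, Set.mem_sdiff,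
      Finset.mem_coe]
    constructor
    · exact fun h => h.1
    · intro hx
      refine ⟨hx, ?_⟩
      have := hs hx
      rw [SimpleGraph.mem_edgeFinset] at this
      exact H.not_isDiag_of_mem_edgeSet this
  · intro G _
    rw [Nat.card_eq_fintype_card, SimpleGraph.edgeFinset_card]

lemma le_sameColour_reach {V W : Type} {G : SimpleGraph V} {f : V → W}
    (h : G ≤ sameColour f) {u v : V} (huv : G.Reachable u v) : f u = f v := by
  obtain ⟨p⟩ := huv
  induction p with
  | nil => rfl
  | cons hadj _ ih => exact (h hadj).2.trans ih

/-- Colourings constant on components are functions on components. -/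
def colourEquiv {V W : Type} (G : SimpleGraph V) :
    {f : V → W // G ≤ sameColour f} ≃ (G.ConnectedComponent → W) where
  toFun f := Quot.lift f.1 (fun _ _ h => le_sameColour_reach f.2 h)
  invFun g := ⟨fun v => g (G.connectedComponentMk v), fun u v h =>
    ⟨h.ne, congrArg g (SimpleGraph.ConnectedComponent.sound h.reachable)⟩⟩
  left_inv f := rfl
  right_inv g := by
    funext c
    induction c using Quot.ind
    rfl

lemma sameColour_bot {V W : Type} (f : V → W) :
    sameColour f = ⊥ ↔ Function.Injective f := by
  constructor
  · intro h u v huv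
    by_contra hne
    have : (sameColour f).Adj u v := ⟨hne, huv⟩
    rw [h] at this
    exact this
  · intro h
    ext u v
    simp only [SimpleGraph.bot_adj, iff_false]
    exact fun h' => h'.1 (h h'.2)

lemma sum_comp (k q : ℕ) :
    ∑ G : SimpleGraph (Fin k), (-1 : ℤ) ^ (Nat.card G.edgeSet) *
      (q : ℤ) ^ (Nat.card G.ConnectedComponent) = (q.descFactorial k : ℤ) := by
  have h1 : ∀ G : SimpleGraph (Fin k), (q : ℤ) ^ (Nat.card G.ConnectedComponent) =
      ∑ f : Fin k → Fin q, if G ≤ sameColour f then (1 : ℤ) else 0 := by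
    intro G
    have := Nat.card_congr (colourEquiv (W := Fin q) G)
    rw [Nat.card_fun, Nat.card_eq_fintype_card, Fintype.card_subtype] at this
    rw [Finset.sum_boole, this]
    simp
  simp only [h1, Finset.mul_sum, mul_ite, mul_one, mul_zero]
  rw [Finset.sum_comm]
  have h2 : ∀ f : Fin k → Fin q,
      ∑ G : SimpleGraph (Fin k),
        (if G ≤ sameColour f then (-1 : ℤ) ^ (Nat.card G.edgeSet) else 0) =
      if Function.Injective f then 1 else 0 := by
    intro f
    have := sum_le_graph (sameColour f)
    simp only [sameColour_bot] at this
    convert this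
  rw [Finset.sum_congr rfl fun f _ => h2 f]
  rw [Finset.sum_boole, ← Fintype.card_subtype,
    Fintype.card_congr (Equiv.subtypeInjectiveEquivEmbedding (Fin k) (Fin q))]
  simp [Fintype.card_embedding_eq]

open Polynomial in
lemma poly_eq (k : ℕ) :
    ∑ G : SimpleGraph (Fin k), C ((-1 : ℤ) ^ (Nat.card G.edgeSet)) *
      X ^ (Nat.card G.ConnectedComponent) = descPochhammer ℤ k := by
  refine Polynomial.eq_of_infinite_eval_eq _ _ ?_
  refine (Set.infinite_range_of_injective (Nat.cast_injective (R := ℤ))).mono ?_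
  rintro _ ⟨q, rfl⟩
  simp only [Set.mem_ofPred_eq]
  rw [descPochhammer_eval_eq_descFactorial, ← sum_comp, eval_finsetSum]
  simp

lemma desc_neg_one (n : ℕ) :
    (descPochhammer ℤ n).eval (-1) = (-1 : ℤ) ^ n * (Nat.factorial n : ℤ) := by
  induction n with
  | zero => simp
  | succ n ih =>
    rw [descPochhammer_succ_eval, ih, Nat.factorial_succ]
    push_cast
    ring

lemma desc_coeff (n : ℕ) :
    (descPochhammer ℤ (n + 1)).coeff 1 = (-1 : ℤ) ^ n * (Nat.factorial n : ℤ) := by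
  rw [descPochhammer_succ_left, Polynomial.coeff_X_mul, Polynomial.coeff_zero_eq_eval_zero,
    Polynomial.eval_comp, ← desc_neg_one]
  simp

lemma connected_iff_card {V : Type} [Fintype V] (G : SimpleGraph V) :
    G.Connected ↔ 1 = Nat.card G.ConnectedComponent := by
  rw [eq_comm, Nat.card_eq_one_iff_unique]
  constructor
  · intro h
    have := h.nonempty
    exact ⟨h.preconnected.subsingleton_connectedComponent, inferInstance⟩
  · rintro ⟨h, ⟨c⟩⟩
    induction c using SimpleGraph.ConnectedComponent.ind with
    | _ v =>
    have : Nonempty V := ⟨v⟩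
    exact ⟨fun a b => SimpleGraph.ConnectedComponent.exact (Subsingleton.elim _ _)⟩

/-- For `k ≥ 1`, the sum of `(-1)^{e(G)}` over all connected simple
graphs `G` on the vertex set `Fin k` equals `(-1)^{k-1} · (k-1)!`. -/
theorem sign_sum_connected_graphs (k : ℕ) (hk : 1 ≤ k) :
    ∑ G ∈ Finset.univ.filter (fun G : SimpleGraph (Fin k) => G.Connected),
        (-1 : ℤ) ^ (Nat.card G.edgeSet) =
      (-1 : ℤ) ^ (k - 1) * (Nat.factorial (k - 1) : ℤ) := by
  obtain ⟨n, rfl⟩ : ∃ n, k = n + 1 := ⟨k - 1, by omega⟩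
  rw [Nat.add_sub_cancel, ← desc_coeff, ← poly_eq, Polynomial.finsetSum_coeff,
    Finset.sum_filter]
  refine Finset.sum_congr rfl fun G _ => ?_
  rw [Polynomial.coeff_C_mul, Polynomial.coeff_X_pow]
  simp only [connected_iff_card, mul_ite, mul_one, mul_zero]
end
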